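/- Let 0 < a_1 < b_1 < a_2 < b_2 and let 0 < δ be such that a_1 + δ < b_1, b_2 − δ > a_2 and δ < b_1 − a_1. Let E = {ξ ∈ ℝ^{2×2} : (λ_1(ξ), λ_2(ξ)) ∈ {(a_1, a_2), (b_1, b_2)}, det ξ > 0} and E_δ = {ξ ∈ ℝ^{2×2} : (λ_1(ξ), λ_2(ξ)) ∈ {(a_1 + δ, a_2), (b_1, b_2 − δ)}, det ξ > 0}. Then Rco_f E_δ ⊂ int Rco_f E. -/

import Mathlib

open MeasureTheory Filter

attribute [local instance] Classical.propDecidable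
attribute [local instance] Matrix.frobeniusNormedAddCommGroup Matrix.frobeniusNormedSpace

noncomputable section

/-- The space of real `N × n` matrices. -/
abbrev Mat (N n : ℕ) : Type := Matrix (Fin N) (Fin n) ℝ

/-- A function `f : ℝ^{N×n} → ℝ` is rank one convex. -/
def RankOneConvexFun {N n : ℕ} (f : Mat N n → ℝ) : Prop :=
  ∀ lam ∈ Set.Icc (0:ℝ) 1, ∀ ξ η : Mat N n, (ξ - η).rank = 1 →
    f (lam • ξ + (1 - lam) • η) ≤ lam * f ξ + (1 - lam) * f η

/-- The hull `Rco_f E`. -/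
def RcoF {N n : ℕ} (E : Set (Mat N n)) : Set (Mat N n) :=
  {ξ | ∀ f : Mat N n → ℝ, RankOneConvexFun f → (∀ η ∈ E, f η ≤ 0) → f ξ ≤ 0}

/-- A set of matrices is rank one convex. -/
def RankOneConvexSet {N n : ℕ} (S : Set (Mat N n)) : Prop :=
  ∀ A ∈ S, ∀ B ∈ S, (A - B).rank = 1 → ∀ t ∈ Set.Icc (0:ℝ) 1, t • A + (1 - t) • B ∈ S

/-- The property `(H_I(U))`, phrased on lists of (weight, matrix) pairs. -/
inductive HIProp {N n : ℕ} (U : Set (Mat N n)) : List (ℝ × Mat N n) → Prop where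
  | single (l : ℝ) (ξ : Mat N n) (hξ : ξ ∈ U) : HIProp U [(l, ξ)]
  | pair (l₁ l₂ : ℝ) (ξ₁ ξ₂ : Mat N n) (h₁ : ξ₁ ∈ U) (h₂ : ξ₂ ∈ U)
      (hrank : (ξ₁ - ξ₂).rank = 1) : HIProp U [(l₁, ξ₁), (l₂, ξ₂)]
  | step (L rest : List (ℝ × Mat N n)) (l₁ l₂ : ℝ) (ξ₁ ξ₂ : Mat N n)
      (hperm : L.Perm ((l₁, ξ₁) :: (l₂, ξ₂) :: rest)) (hrest : rest ≠ [])
      (h₁ : ξ₁ ∈ U) (h₂ : ξ₂ ∈ U) (hrank : (ξ₁ - ξ₂).rank = 1)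
      (hrec : HIProp U ((l₁ + l₂, ((l₁ + l₂)⁻¹) • (l₁ • ξ₁ + l₂ • ξ₂)) :: rest)) :
      HIProp U L

/-- The family `(λ_i, ξ_i)_{1 ≤ i ≤ I}` satisfies `(H_I(U))`. -/
def SatisfiesH {N n : ℕ} (U : Set (Mat N n)) (I : ℕ) (l : Fin I → ℝ)
    (ξ : Fin I → Mat N n) : Prop :=
  HIProp U (List.ofFn fun i => (l i, ξ i))

/-- The gradient of a map `u : ℝ^n → ℝ^N`, as an `N × n` matrix. -/
def matGrad {N n : ℕ} (u : (Fin n → ℝ) → Fin N → ℝ) (x : Fin n → ℝ) : Mat N n :=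
  LinearMap.toMatrix' (fderiv ℝ u x).toLinearMap

/-- `u` is affine on the set `s`. -/
def AffineOn {N n : ℕ} (u : (Fin n → ℝ) → Fin N → ℝ) (s : Set (Fin n → ℝ)) : Prop :=
  ∃ (A : Mat N n) (b : Fin N → ℝ), ∀ x ∈ s, u x = A.mulVec x + b

/-- `u` is piecewise affine on the open set `Ω`. -/
def PiecewiseAffineOn {N n : ℕ} (u : (Fin n → ℝ) → Fin N → ℝ)
    (Ω : Set (Fin n → ℝ)) : Prop :=
  ContinuousOn u (closure Ω) ∧
  ∃ P : ℕ → Set (Fin n → ℝ),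
    (∀ k, IsOpen (P k)) ∧ (∀ k, P k ⊆ Ω) ∧
    (∀ k l, k ≠ l → Disjoint (P k) (P l)) ∧
    volume (Ω \ ⋃ k, P k) = 0 ∧ ∀ k, AffineOn u (P k)

/-- `u` is piecewise `C¹` on the open set `Ω`. -/
def PiecewiseC1On {N n : ℕ} (u : (Fin n → ℝ) → Fin N → ℝ)
    (Ω : Set (Fin n → ℝ)) : Prop :=
  ContinuousOn u (closure Ω) ∧
  ∃ P : ℕ → Set (Fin n → ℝ),
    (∀ k, IsOpen (P k)) ∧ (∀ k, P k ⊆ Ω) ∧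
    (∀ k l, k ≠ l → Disjoint (P k) (P l)) ∧
    volume (Ω \ ⋃ k, P k) = 0 ∧ ∀ k, ContDiffOn ℝ 1 u (P k)

/-- `u ∈ φ + W₀^{1,∞}(Ω; ℝ^N)`: `u` is Lipschitz on `closure Ω` and agrees with `φ`
on the boundary of `Ω`. -/
def MemW01inf {N n : ℕ} (Ω : Set (Fin n → ℝ)) (φ u : (Fin n → ℝ) → Fin N → ℝ) : Prop :=
  (∃ C : NNReal, LipschitzOnWith C u (closure Ω)) ∧ ∀ x ∈ frontier Ω, u x = φ x

/-- `K` has the relaxation property with respect to `E`. -/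
def HasRelaxationProperty {N n : ℕ} (K E : Set (Mat N n)) : Prop :=
  ∀ Ω : Set (Fin n → ℝ), IsOpen Ω → Bornology.IsBounded Ω →
    ∀ ξ ∈ K, ∀ b : Fin N → ℝ,
      ∃ u : ℕ → (Fin n → ℝ) → Fin N → ℝ,
        (∀ ν, PiecewiseAffineOn (u ν) Ω) ∧
        (∀ ν, MemW01inf Ω (fun x => ξ.mulVec x + b) (u ν)) ∧
        (∀ ν, ∀ᵐ x ∂(volume.restrict Ω), matGrad (u ν) x ∈ E ∪ K) ∧
        (∃ C : NNReal, ∀ ν, LipschitzOnWith C (u ν) (closure Ω)) ∧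
        TendstoUniformlyOn u (fun x => ξ.mulVec x + b) atTop (closure Ω) ∧
        Tendsto (fun ν => ∫ x in Ω, Metric.infDist (matGrad (u ν) x) E) atTop (nhds 0)

/-- The singular values of a square matrix, in nondecreasing order:
the square roots of the eigenvalues of `ξ ξᵀ`, sorted. -/
def singularValues {n : ℕ} (ξ : Matrix (Fin n) (Fin n) ℝ) (i : Fin n) : ℝ :=
  Real.sqrt ((Matrix.isHermitian_mul_conjTranspose_self ξ).eigenvalues
    (Tuple.sort (Matrix.isHermitian_mul_conjTranspose_self ξ).eigenvalues i))

end

section Statements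

open Metric Set

def NN (ξ : Mat 2 2) : ℝ := ξ 0 0 ^ 2 + ξ 0 1 ^ 2 + ξ 1 0 ^ 2 + ξ 1 1 ^ 2

lemma rank_one_aux (D : Mat 2 2) (h0 : D ≠ 0) (hd : D.det = 0) : D.rank = 1 := by
  have h1 : D.rank ≠ 0 := by
    intro h
    have e : Module.finrank ℝ (LinearMap.range D.mulVecLin) = 0 := h
    rw [Submodule.finrank_eq_zero, LinearMap.range_eq_bot] at e
    apply h0
    ext i j
    have e2 := congrFun (LinearMap.congr_fun e (Pi.single j 1)) i
    simpa using e2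
  have h2 : D.rank ≤ 2 := by simpa using D.rank_le_width
  have h3 : D.rank ≠ 2 := by
    intro h
    obtain ⟨v, hv, hv'⟩ := Matrix.exists_mulVec_eq_zero_iff.mpr hd
    have hk := D.mulVecLin.finrank_range_add_finrank_ker
    have e : Module.finrank ℝ (LinearMap.range D.mulVecLin) = 2 := h
    rw [e] at hk
    simp at hk
    have : v ∈ LinearMap.ker D.mulVecLin := by simpa using hv'
    rw [Matrix.ker_mulVecLin_eq_bot_iff] at hk
    exact hv (hk v hv')
  omega

lemma seg_aux (f : Mat 2 2 → ℝ) (hf : RankOneConvexFun f) (ξ D : Mat 2 2) (h0 : D ≠ 0)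
    (hd : D.det = 0) (s t : ℝ) (hs : s < 0) (ht : 0 < t)
    (h1 : f (ξ + s • D) ≤ 0) (h2 : f (ξ + t • D) ≤ 0) : f ξ ≤ 0 := by
  have hst : 0 < t - s := by linarith
  have hr : ((ξ + s • D) - (ξ + t • D)).rank = 1 := by
    have e : (ξ + s • D) - (ξ + t • D) = (s - t) • D := by
      rw [sub_smul]; abel
    rw [e]
    apply rank_one_aux
    · exact smul_ne_zero (by linarith) h0
    · rw [Matrix.det_smul, hd, mul_zero]
  have hm : t / (t - s) ∈ Icc (0:ℝ) 1 := by
    constructor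
    · positivity
    · rw [div_le_one hst]; linarith
  have h := hf _ hm _ _ hr
  have e : (t / (t - s)) • (ξ + s • D) + (1 - t / (t - s)) • (ξ + t • D) = ξ := by
    ext i j
    simp only [Matrix.add_apply, Matrix.smul_apply, smul_eq_mul]
    field_simp
    ring
  rw [e] at h
  have := mul_nonneg hm.1 (neg_nonneg.mpr h1)
  have := mul_nonneg (sub_nonneg.mpr hm.2) (neg_nonneg.mpr h2)
  linarith

lemma col_aux (f : Mat 2 2 → ℝ) (hf : RankOneConvexFun f) (α A : ℝ) (hα : 0 < α)
    (H : ∀ ξ : Mat 2 2, ξ.det = α → NN ξ = A → f ξ ≤ 0) (ξ : Mat 2 2) (h1 : ξ.det = α)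
    (h2 : NN ξ < A) : f ξ ≤ 0 := by
  set b := ξ 0 0 * ξ 0 1 + ξ 1 0 * ξ 1 1 with hb
  set c := ξ 0 1 ^ 2 + ξ 1 1 ^ 2 with hc
  have hdet : ξ 0 0 * ξ 1 1 - ξ 0 1 * ξ 1 0 = α := by rw [← h1, Matrix.det_fin_two]
  have hc0 : 0 < c := by
    rcases (by positivity : 0 ≤ c).lt_or_eq with h | h
    · exact h
    · exfalso
      have e1 : ξ 0 1 = 0 := by nlinarith [sq_nonneg (ξ 0 1), sq_nonneg (ξ 1 1)]
      have e2 : ξ 1 1 = 0 := by nlinarith [sq_nonneg (ξ 0 1), sq_nonneg (ξ 1 1)]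
      rw [e1, e2] at hdet
      linarith
  set r := Real.sqrt (b ^ 2 + c * (A - NN ξ)) with hr
  have hp : 0 < c * (A - NN ξ) := mul_pos hc0 (by linarith)
  have hr2 : r ^ 2 = b ^ 2 + c * (A - NN ξ) := Real.sq_sqrt (by positivity)
  have hrb : |b| < r := by
    rw [← Real.sqrt_sq_eq_abs]
    exact Real.sqrt_lt_sqrt (sq_nonneg _) (by linarith)
  obtain ⟨hrb1, hrb2⟩ := abs_lt.mp hrb
  let D : Mat 2 2 := !![ξ 0 1, 0; ξ 1 1, 0]
  have hD : D ≠ 0 := by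
    intro h
    have e1 : ξ 0 1 = 0 := by simpa [D] using congrFun (congrFun h 0) 0
    have e2 : ξ 1 1 = 0 := by simpa [D] using congrFun (congrFun h 1) 0
    rw [hc, e1, e2] at hc0
    norm_num at hc0
  have key : ∀ t : ℝ, c * t ^ 2 + 2 * b * t + (NN ξ - A) = 0 → f (ξ + t • D) ≤ 0 := by
    intro t ht
    apply H
    · rw [Matrix.det_fin_two]
      simp [D]
      linear_combination hdet
    · simp only [NN, b, c] at ht ⊢
      simp [D]
      linear_combination ht
  refine seg_aux f hf ξ D hD (by simp [D, Matrix.det_fin_two]) ((-b - r) / c) ((-b + r) / c)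
    (div_neg_of_neg_of_pos (by linarith) hc0) (div_pos (by linarith) hc0) (key _ ?_) (key _ ?_)
  · field_simp
    linear_combination hr2
  · field_simp
    linear_combination hr2

lemma sv_aux (ξ : Mat 2 2) : 0 ≤ singularValues ξ 0 ∧ singularValues ξ 0 ≤ singularValues ξ 1 ∧
    singularValues ξ 0 ^ 2 + singularValues ξ 1 ^ 2 = NN ξ ∧
    (singularValues ξ 0 * singularValues ξ 1) ^ 2 = ξ.det ^ 2 := by
  set h := Matrix.isHermitian_mul_conjTranspose_self ξ with hh
  have hpsd := Matrix.posSemidef_self_mul_conjTranspose ξ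
  have hnn : ∀ i, 0 ≤ h.eigenvalues i := fun i => hpsd.eigenvalues_nonneg i
  have htr := h.trace_eq_sum_eigenvalues
  have hdet := h.det_eq_prod_eigenvalues
  have hsum := Equiv.sum_comp (Tuple.sort h.eigenvalues) h.eigenvalues
  have hprod := Equiv.prod_comp (Tuple.sort h.eigenvalues) h.eigenvalues
  have hmono := Tuple.monotone_sort h.eigenvalues
  have hm : h.eigenvalues (Tuple.sort h.eigenvalues 0) ≤ h.eigenvalues (Tuple.sort h.eigenvalues 1) :=
    hmono (by decide : (0 : Fin 2) ≤ 1)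
  simp only [Fin.sum_univ_two, Fin.prod_univ_two] at hsum hprod htr hdet
  refine ⟨Real.sqrt_nonneg _, Real.sqrt_le_sqrt hm, ?_, ?_⟩
  · unfold singularValues
    rw [Real.sq_sqrt (hnn _), Real.sq_sqrt (hnn _), hsum]
    have e : (ξ * Matrix.conjTranspose ξ).trace = NN ξ := by
      simp [Matrix.trace, Matrix.mul_apply, NN]
      ring
    rw [e] at htr
    exact htr.symm
  · unfold singularValues
    rw [mul_pow, Real.sq_sqrt (hnn _), Real.sq_sqrt (hnn _), hprod]
    have e : (ξ * Matrix.conjTranspose ξ).det = ξ.det ^ 2 := by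
      simp
      ring
    rw [e] at hdet
    exact hdet.symm

lemma sv_of (ξ : Mat 2 2) (x y : ℝ) (hx : 0 < x) (hxy : x < y) (hd : ξ.det = x * y)
    (hN : NN ξ = x ^ 2 + y ^ 2) : (singularValues ξ 0, singularValues ξ 1) = (x, y) := by
  obtain ⟨h1, h2, h3, h4⟩ := sv_aux ξ
  set s := singularValues ξ 0
  set t := singularValues ξ 1
  have h5 : s * t = x * y := by
    rw [hd] at h4
    exact (sq_eq_sq₀ (mul_nonneg h1 (h1.trans h2)) (mul_pos hx (hx.trans hxy)).le).mp h4
  have h6 : s + t = x + y := by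
    refine (sq_eq_sq₀ (by linarith) (by linarith)).mp ?_
    linear_combination h3 + hN + 2 * h5
  have h7 : t - s = y - x := by
    refine (sq_eq_sq₀ (by linarith) (by linarith)).mp ?_
    linear_combination h3 + hN - 2 * h5
  exact Prod.ext (by simp only; linarith) (by simp only; linarith)

lemma of_sv (ξ : Mat 2 2) (x y : ℝ) (hx : 0 < x) (hy : 0 < y) (hd : 0 < ξ.det)
    (h : (singularValues ξ 0, singularValues ξ 1) = (x, y)) :
    ξ.det = x * y ∧ NN ξ = x ^ 2 + y ^ 2 := by
  obtain ⟨h1, h2, h3, h4⟩ := sv_aux ξ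
  obtain ⟨e1, e2⟩ := Prod.mk.inj h
  rw [e1, e2] at h3 h4
  exact ⟨((sq_eq_sq₀ (by positivity) hd.le).mp h4).symm, h3.symm⟩

lemma cont_entry (i j : Fin 2) : Continuous (fun ξ : Mat 2 2 => ξ i j) := by
  fun_prop

lemma cont_NN : Continuous NN := by
  unfold NN
  fun_prop

lemma cont_det : Continuous (fun ξ : Mat 2 2 => ξ.det) := by
  fun_prop

/-- local openness -/
lemma open_aux (K : Set (Mat 2 2)) (α β A B : ℝ)
    (HK : ∀ ξ D : Mat 2 2, ∀ s t : ℝ, D ≠ 0 → D.det = 0 → s < 0 → 0 < t →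
      (ξ + s • D).det = α → NN (ξ + s • D) < A → (ξ + t • D).det = β → NN (ξ + t • D) < B → ξ ∈ K)
    (ξ : Mat 2 2) (p q k : ℝ) (hp : 0 < p) (hq : 0 < q) (hk : p - q < k) (hk' : k < p + q)
    (hk0 : 0 < k) (hd : ξ.det = p ^ 2 - q ^ 2) (hN : NN ξ = 2 * (p ^ 2 + q ^ 2))
    (h1 : α < ξ.det) (h2 : ξ.det < β)
    (hA : (2 * p + (α - ξ.det) / k) ^ 2 < A + 2 * α)
    (hB : (2 * p + (β - ξ.det) / k) ^ 2 < B + 2 * β) : ξ ∈ interior K := by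
  -- conformal and anticonformal parts
  set z1 := (ξ 0 0 + ξ 1 1) / 2 with hz1
  set z2 := (ξ 1 0 - ξ 0 1) / 2 with hz2
  set w1 := (ξ 0 0 - ξ 1 1) / 2 with hw1
  set w2 := (ξ 1 0 + ξ 0 1) / 2 with hw2
  have hd' := hd
  rw [Matrix.det_fin_two] at hd'
  have hN' := hN
  unfold NN at hN'
  have hz : z1 ^ 2 + z2 ^ 2 = p ^ 2 := by
    rw [hz1, hz2]; linear_combination hN' / 4 + hd' / 2
  have hw : w1 ^ 2 + w2 ^ 2 = q ^ 2 := by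
    rw [hw1, hw2]; linear_combination hN' / 4 - hd' / 2
  set c := (p - k) / q with hc
  have hqc : q * c = p - k := by rw [hc]; field_simp
  have hc1 : c ^ 2 ≤ 1 := by
    rw [sq_le_one_iff_abs_le_one, abs_le, hc]
    constructor
    · rw [le_div_iff₀ hq]; linarith
    · rw [div_le_iff₀ hq]; linarith
  set σ := Real.sqrt (1 - c ^ 2) with hσ
  have hσ2 : σ ^ 2 = 1 - c ^ 2 := Real.sq_sqrt (by linarith)
  -- unit vectors
  obtain ⟨u1, u2, hu1, hu2⟩ : ∃ u1 u2 : ℝ, p * u1 = z1 ∧ p * u2 = z2 :=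
    ⟨z1 / p, z2 / p, by field_simp, by field_simp⟩
  obtain ⟨v1, v2, hv1, hv2⟩ : ∃ v1 v2 : ℝ, q * v1 = w1 ∧ q * v2 = w2 :=
    ⟨w1 / q, w2 / q, by field_simp, by field_simp⟩
  have hu : u1 ^ 2 + u2 ^ 2 = 1 := by
    have : p ^ 2 * (u1 ^ 2 + u2 ^ 2) = p ^ 2 * 1 := by
      rw [← hu1, ← hu2] at hz; linear_combination hz
    exact mul_left_cancel₀ (by positivity) this
  have hv : v1 ^ 2 + v2 ^ 2 = 1 := by
    have : q ^ 2 * (v1 ^ 2 + v2 ^ 2) = q ^ 2 * 1 := by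
      rw [← hv1, ← hv2] at hw; linear_combination hw
    exact mul_left_cancel₀ (by positivity) this
  set o1 := v1 * c - v2 * σ with ho1
  set o2 := v1 * σ + v2 * c with ho2
  have ho : o1 ^ 2 + o2 ^ 2 = 1 := by
    rw [ho1, ho2]
    linear_combination (v1 ^ 2 + v2 ^ 2) * hσ2 + hv
  have hwo : w1 * o1 + w2 * o2 = p - k := by
    rw [ho1, ho2, ← hv1, ← hv2]
    linear_combination q * c * hv + hqc
  have hzu : z1 * u1 + z2 * u2 = p := by
    rw [← hu1, ← hu2]
    linear_combination p * hu
  let D : Mat 2 2 := !![u1 + o1, -u2 + o2; u2 + o2, u1 - o1]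
  have hDd : D.det = 0 := by
    simp only [D, Matrix.det_fin_two_of]
    linear_combination hu - ho
  have hD0 : D ≠ 0 := by
    intro h
    have e1 : u1 + o1 = 0 := by simpa [D] using congrFun (congrFun h 0) 0
    have e2 : -u2 + o2 = 0 := by simpa [D] using congrFun (congrFun h 0) 1
    have e3 : u2 + o2 = 0 := by simpa [D] using congrFun (congrFun h 1) 0
    have e4 : u1 - o1 = 0 := by simpa [D] using congrFun (congrFun h 1) 1
    have e5 : u1 = 0 := by linarith
    have e6 : u2 = 0 := by linarith
    rw [e5, e6] at hu
    norm_num at hu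
  -- linear form of the determinant
  let L : Mat 2 2 → ℝ := fun η => η 0 0 * (u1 - o1) + η 1 1 * (u1 + o1) - η 0 1 * (u2 + o2)
    - η 1 0 * (-u2 + o2)
  have hLc : Continuous L := by
    simp only [L]; fun_prop
  have hdetL : ∀ η : Mat 2 2, ∀ s : ℝ, (η + s • D).det = η.det + s * L η := by
    intro η s
    rw [Matrix.det_fin_two, Matrix.det_fin_two]
    simp [D, L]
    linear_combination s ^ 2 * (hu - ho)
  have hLξ : L ξ = 2 * k := by
    simp only [L]
    simp only [z1, z2, w1, w2] at hzu hwo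
    linear_combination 2 * hzu - 2 * hwo
  have hNξ : ∀ s : ℝ, NN (ξ + s • D) + 2 * (ξ + s • D).det = 4 * (p + s) ^ 2 := by
    intro s
    rw [Matrix.det_fin_two]
    simp only [NN]
    simp [D]
    simp only [z1, z2] at hzu hz
    linear_combination 4 * hz + 8 * s * hzu + 4 * s ^ 2 * hu
  let S : ℝ → Mat 2 2 → ℝ := fun γ η => (γ - η.det) / L η
  have hLξ0 : L ξ ≠ 0 := by rw [hLξ]; positivity
  have hS : ∀ γ, ContinuousAt (S γ) ξ := by
    intro γ
    exact ContinuousAt.div (by fun_prop) hLc.continuousAt hLξ0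
  have hG : ∀ γ, ContinuousAt (fun η => NN (η + S γ η • D)) ξ := by
    intro γ
    exact cont_NN.continuousAt.comp (continuousAt_id.add ((hS γ).smul continuousAt_const))
  have hval : ∀ γ, NN (ξ + S γ ξ • D) = (2 * p + (γ - ξ.det) / k) ^ 2 - 2 * γ := by
    intro γ
    have h := hNξ (S γ ξ)
    have h' : (ξ + S γ ξ • D).det = γ := by
      rw [hdetL]; simp only [S]; field_simp; ring
    have h'' : 2 * S γ ξ = (γ - ξ.det) / k := by
      simp only [S]; rw [hLξ]; field_simp
    rw [h'] at h
    rw [← h'']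
    linear_combination h
  rw [mem_interior_iff_mem_nhds]
  have c1 : ∀ᶠ η in nhds ξ, 0 < L η :=
    hLc.continuousAt.eventually_const_lt (by rw [hLξ]; positivity)
  have c2 : ∀ᶠ η : Mat 2 2 in nhds ξ, α < η.det := cont_det.continuousAt.eventually_const_lt h1
  have c3 : ∀ᶠ η : Mat 2 2 in nhds ξ, η.det < β := cont_det.continuousAt.eventually_lt_const h2
  have c4 : ∀ᶠ η in nhds ξ, NN (η + S α η • D) < A :=
    (hG α).eventually_lt_const (by beta_reduce; rw [hval]; linarith)
  have c5 : ∀ᶠ η in nhds ξ, NN (η + S β η • D) < B :=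
    (hG β).eventually_lt_const (by beta_reduce; rw [hval]; linarith)
  filter_upwards [c1, c2, c3, c4, c5] with η d1 d2 d3 d4 d5
  refine HK η D (S α η) (S β η) hD0 hDd (div_neg_of_neg_of_pos (by linarith) d1)
    (div_pos (by linarith) d1) ?_ d4 ?_ d5
  · rw [hdetL]; simp only [S]; field_simp; ring
  · rw [hdetL]; simp only [S]; field_simp; ring

lemma closed_aux (d n : ℝ) : IsCompact {ξ : Mat 2 2 | ξ.det = d ∧ NN ξ = n} := by
  have hcl : IsClosed {ξ : Mat 2 2 | ξ.det = d ∧ NN ξ = n} :=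
    (isClosed_eq cont_det continuous_const).inter (isClosed_eq cont_NN continuous_const)
  have hbox : IsCompact (Set.pi univ fun _ : Fin 2 => Set.pi univ fun _ : Fin 2 =>
      Icc (-(1 + n)) (1 + n)) :=
    isCompact_univ_pi fun _ => isCompact_univ_pi fun _ => isCompact_Icc
  refine IsCompact.of_isClosed_subset (s := Set.pi univ fun _ : Fin 2 => Set.pi univ fun _ : Fin 2 =>
      Icc (-(1 + n)) (1 + n)) hbox hcl ?_
  rintro ξ ⟨-, h⟩ i - j -
  rw [mem_Icc, ← abs_le]
  have h2 : ξ i j ^ 2 ≤ n := by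
    rw [← h]
    unfold NN
    fin_cases i <;> fin_cases j <;> simp <;> nlinarith [sq_nonneg (ξ 0 0), sq_nonneg (ξ 0 1),
      sq_nonneg (ξ 1 0), sq_nonneg (ξ 1 1)]
  rw [abs_le]
  constructor <;> nlinarith [sq_nonneg (ξ i j + 1), sq_nonneg (ξ i j - 1), sq_nonneg (ξ i j)]

lemma sq_lt_aux (u v : ℝ) (h1 : -v < u) (h2 : u < v) : u ^ 2 < v ^ 2 := sq_lt_sq' h1 h2

theorem stmt17 (a₁ a₂ b₁ b₂ δ : ℝ) (ha₁ : 0 < a₁) (hab : a₁ < b₁) (hba : b₁ < a₂)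
    (hb₂ : a₂ < b₂) (hδ : 0 < δ) (hδ₁ : a₁ + δ < b₁) (hδ₂ : a₂ < b₂ - δ)
    (hδ₃ : δ < b₁ - a₁)
    (E Eδ : Set (Mat 2 2))
    (hE : E = {ξ : Mat 2 2 | ((singularValues ξ 0, singularValues ξ 1) = (a₁, a₂) ∨
      (singularValues ξ 0, singularValues ξ 1) = (b₁, b₂)) ∧ 0 < ξ.det})
    (hEδ : Eδ = {ξ : Mat 2 2 |
      ((singularValues ξ 0, singularValues ξ 1) = (a₁ + δ, a₂) ∨
      (singularValues ξ 0, singularValues ξ 1) = (b₁, b₂ - δ)) ∧ 0 < ξ.det}) :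
    RcoF Eδ ⊆ interior (RcoF E) := by
  have hα : 0 < a₁ * a₂ := mul_pos ha₁ (by linarith)
  have hβ : 0 < b₁ * b₂ := mul_pos (by linarith) (by linarith)
  have HK : ∀ ξ D : Mat 2 2, ∀ s t : ℝ, D ≠ 0 → D.det = 0 → s < 0 → 0 < t →
      (ξ + s • D).det = a₁ * a₂ → NN (ξ + s • D) < a₁ ^ 2 + a₂ ^ 2 →
      (ξ + t • D).det = b₁ * b₂ → NN (ξ + t • D) < b₁ ^ 2 + b₂ ^ 2 → ξ ∈ RcoF E := by
    intro ξ D s t h0 hd hs ht d1 n1 d2 n2 f hf hfE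
    refine seg_aux f hf ξ D h0 hd s t hs ht ?_ ?_
    · refine col_aux f hf _ _ hα (fun η e1 e2 => hfE η ?_) _ d1 n1
      rw [hE]
      exact ⟨Or.inl (sv_of η _ _ ha₁ (by linarith) e1 e2), by rw [e1]; exact hα⟩
    · refine col_aux f hf _ _ hβ (fun η e1 e2 => hfE η ?_) _ d2 n2
      rw [hE]
      exact ⟨Or.inr (sv_of η _ _ (by linarith) (by linarith) e1 e2), by rw [e1]; exact hβ⟩
  -- the compact set containing `Eδ`
  let C : Set (Mat 2 2) := {ξ : Mat 2 2 | ξ.det = (a₁ + δ) * a₂ ∧ NN ξ = (a₁ + δ) ^ 2 + a₂ ^ 2} ∪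
    {ξ : Mat 2 2 | ξ.det = b₁ * (b₂ - δ) ∧ NN ξ = b₁ ^ 2 + (b₂ - δ) ^ 2}
  have hC : IsCompact C := (closed_aux _ _).union (closed_aux _ _)
  have hEC : Eδ ⊆ C := by
    rw [hEδ]
    rintro ξ ⟨h | h, hd⟩
    · exact Or.inl (of_sv ξ _ _ (by linarith) (by linarith) hd h)
    · exact Or.inr (of_sv ξ _ _ (by linarith) (by linarith) hd h)
  have hCK : C ⊆ interior (RcoF E) := by
    rintro ξ (⟨hd, hN⟩ | ⟨hd, hN⟩)
    · have hP : 0 < b₁ + b₂ - a₁ - δ - a₂ := by linarith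
      obtain ⟨k, hk1, hk2⟩ : ∃ k, max (max (a₁ + δ) (δ * a₂ / (2 * a₁ + 2 * a₂ + δ)))
          ((b₁ * b₂ - (a₁ + δ) * a₂) / (b₁ + b₂ - a₁ - δ - a₂)) < k ∧ k < a₂ := by
        apply exists_between
        refine max_lt (max_lt (by linarith) ?_) ?_
        · rw [div_lt_iff₀ (by linarith)]; nlinarith
        · rw [div_lt_iff₀ hP]; nlinarith [mul_pos (sub_pos.mpr hba) (sub_pos.mpr hb₂)]
      obtain ⟨hk3, hk4⟩ := max_lt_iff.mp hk1
      obtain ⟨hk5, hk6⟩ := max_lt_iff.mp hk3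
      rw [div_lt_iff₀ (by linarith)] at hk4 hk6
      have hk0 : 0 < k := by linarith
      refine open_aux _ _ _ _ _ HK ξ ((a₁ + δ + a₂) / 2) ((a₂ - (a₁ + δ)) / 2) k (by linarith)
        (by linarith) (by linarith) (by linarith) hk0 (by rw [hd]; ring) (by rw [hN]; ring)
        (by rw [hd]; nlinarith) (by rw [hd]; nlinarith) ?_ ?_
      · rw [hd, show a₁ ^ 2 + a₂ ^ 2 + 2 * (a₁ * a₂) = (a₁ + a₂) ^ 2 by ring]
        apply sq_lt_aux
        · have : -(2 * a₁ + 2 * a₂ + δ) < (a₁ * a₂ - (a₁ + δ) * a₂) / k := by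
            rw [lt_div_iff₀ hk0]; nlinarith
          linarith
        · have : (a₁ * a₂ - (a₁ + δ) * a₂) / k < -δ := by
            rw [div_lt_iff₀ hk0]; nlinarith
          linarith
      · rw [hd, show b₁ ^ 2 + b₂ ^ 2 + 2 * (b₁ * b₂) = (b₁ + b₂) ^ 2 by ring]
        apply sq_lt_aux
        · have : 0 < (b₁ * b₂ - (a₁ + δ) * a₂) / k := by
            apply div_pos _ hk0; nlinarith
          linarith
        · have : (b₁ * b₂ - (a₁ + δ) * a₂) / k < b₁ + b₂ - a₁ - δ - a₂ := by
            rw [div_lt_iff₀ hk0]; nlinarith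
          linarith
    · have hP : 0 < b₁ + b₂ - δ - a₁ - a₂ := by linarith
      obtain ⟨k, hk1, hk2⟩ : ∃ k, b₁ < k ∧ k < min (b₂ - δ)
          ((b₁ * (b₂ - δ) - a₁ * a₂) / (b₁ + b₂ - δ - a₁ - a₂)) := by
        apply exists_between
        refine lt_min (by linarith) ?_
        rw [lt_div_iff₀ hP]; nlinarith [mul_pos (sub_pos.mpr hba) (sub_pos.mpr hab)]
      obtain ⟨hk3, hk4⟩ := lt_min_iff.mp hk2
      rw [lt_div_iff₀ hP] at hk4
      have hk0 : 0 < k := by linarith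
      refine open_aux _ _ _ _ _ HK ξ ((b₁ + (b₂ - δ)) / 2) ((b₂ - δ - b₁) / 2) k (by linarith)
        (by linarith) (by linarith) (by linarith) hk0 (by rw [hd]; ring) (by rw [hN]; ring)
        (by rw [hd]; nlinarith) (by rw [hd]; nlinarith) ?_ ?_
      · rw [hd, show a₁ ^ 2 + a₂ ^ 2 + 2 * (a₁ * a₂) = (a₁ + a₂) ^ 2 by ring]
        apply sq_lt_aux
        · have : -(b₁ + b₂ - δ) < (a₁ * a₂ - b₁ * (b₂ - δ)) / k := by
            rw [lt_div_iff₀ hk0]; nlinarith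
          linarith
        · have : (a₁ * a₂ - b₁ * (b₂ - δ)) / k < -(b₁ + b₂ - δ - a₁ - a₂) := by
            rw [div_lt_iff₀ hk0]; nlinarith
          linarith
      · rw [hd, show b₁ ^ 2 + b₂ ^ 2 + 2 * (b₁ * b₂) = (b₁ + b₂) ^ 2 by ring]
        apply sq_lt_aux
        · have : 0 < (b₁ * b₂ - b₁ * (b₂ - δ)) / k := by
            apply div_pos _ hk0; nlinarith
          linarith
        · have : (b₁ * b₂ - b₁ * (b₂ - δ)) / k < δ := by
            rw [div_lt_iff₀ hk0]; nlinarith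
          linarith
  obtain ⟨V, hV, hVK⟩ := compact_open_separated_add_right hC isOpen_interior hCK
  intro ξ hξ
  rw [mem_interior_iff_mem_nhds]
  have hmem : ∀ᶠ η in nhds ξ, η - ξ ∈ V := by
    have hc : ContinuousAt (fun η : Mat 2 2 => η - ξ) ξ := by fun_prop
    apply hc
    beta_reduce
    rw [sub_self]
    exact hV
  filter_upwards [hmem] with η hη f hf hfE
  have := hξ (fun ζ => f (ζ + (η - ξ))) ?_ ?_
  · simpa using this
  · intro lam hl x y hxy
    have h := hf lam hl (x + (η - ξ)) (y + (η - ξ)) (by simpa using hxy)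
    have e : lam • (x + (η - ξ)) + (1 - lam) • (y + (η - ξ)) =
        lam • x + (1 - lam) • y + (η - ξ) := by
      ext i j
      simp only [Matrix.add_apply, Matrix.smul_apply, Matrix.sub_apply, smul_eq_mul]
      ring
    rw [e] at h
    exact h
  · intro ζ hζ
    exact interior_subset (hVK (Set.add_mem_add (hEC hζ) hη)) f hf hfE

end Statements
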